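/- Let (a^k)_k and (b^k)_k be two a.e. monotone sequences of vectors in ℝ^k satisfying max_{1≤j≤k}|a_j^k| = O(log k) and max_{1≤j≤k}|b_j^k| = O(log k) as k → ∞. If (a^k, b^k)_k is μ-distributed for some tight probability measure μ on ℝ², then for every bounded continuous function φ : ℝ → ℝ, lim_{k→∞} (1/k)·Trace[φ(J(a^k,b^k))] = (1/π) ∫_{ℝ²} ∫_0^π φ(x + 2y·cos t) dt dμ(x,y). -/

import Mathlib

open Filter MeasureTheory

noncomputable section

/-- The `k × k` Jacobi (real symmetric tridiagonal) matrix with diagonal entries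
`a 0, …, a (k-1)` and sub/super-diagonal entries `b 0, …, b (k-2)` (0-indexed). -/
def jacobiMatrix (k : ℕ) (a b : ℕ → ℝ) : Matrix (Fin k) (Fin k) ℝ :=
  Matrix.of fun i j =>
    if (i : ℕ) = (j : ℕ) then a i
    else if (i : ℕ) + 1 = (j : ℕ) then b i
    else if (j : ℕ) + 1 = (i : ℕ) then b j
    else 0

theorem jacobiMatrix_isHermitian (k : ℕ) (a b : ℕ → ℝ) :
    (jacobiMatrix k a b).IsHermitian := by
  show _ = _
  ext i j
  simp only [Matrix.conjTranspose_apply, jacobiMatrix, Matrix.of_apply, star_trivial]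
  by_cases h1 : (i : ℕ) = (j : ℕ)
  · have h : i = j := Fin.ext h1
    subst h
    rfl
  · have h1' : ¬ (j : ℕ) = (i : ℕ) := fun h => h1 h.symm
    by_cases h2 : (i : ℕ) + 1 = (j : ℕ)
    · have h3 : ¬ (j : ℕ) + 1 = (i : ℕ) := by omega
      simp [h1, h1', h2, h3]
    · by_cases h3 : (j : ℕ) + 1 = (i : ℕ) <;> simp [h1, h1', h2, h3]

/-- `Trace[φ(J(a,b))] = ∑ⱼ φ(λⱼ)`, the sum of `φ` over the eigenvalues of the Jacobi matrix. -/
def jacobiTrace (k : ℕ) (a b : ℕ → ℝ) (φ : ℝ → ℝ) : ℝ :=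
  ∑ i, φ ((jacobiMatrix_isHermitian k a b).eigenvalues i)

/-- The class `𝒮`: small deviations `∑ᵢ |a_{i+1}^k − a_i^k| = o(k)` and entries in `[0,1]`. -/
def MemS (a : ℕ → ℕ → ℝ) : Prop :=
  ((fun k : ℕ => ∑ i ∈ Finset.range (k - 1), |a k (i + 1) - a k i|)
      =o[Filter.atTop] fun k : ℕ => (k : ℝ)) ∧
  ∀ k : ℕ, ∀ i < k, a k i ∈ Set.Icc (0 : ℝ) 1

/-- The class `𝒮′`: for every `δ ∈ (0,1)`, `∑ᵢ |a_{i+1}^k − a_i^k| = O(k^{1−δ})`, and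
`maxᵢ |a_i^k| = O(log k)`. -/
def MemS' (a : ℕ → ℕ → ℝ) : Prop :=
  (∀ δ : ℝ, δ ∈ Set.Ioo (0 : ℝ) 1 →
    ((fun k : ℕ => ∑ i ∈ Finset.range (k - 1), |a k (i + 1) - a k i|)
        =O[Filter.atTop] fun k : ℕ => (k : ℝ) ^ (1 - δ))) ∧
  ∃ C : ℝ, ∀ᶠ k : ℕ in Filter.atTop, ∀ i < k, |a k i| ≤ C * Real.log k

/-- `μ`-distributed on `I² = [0,1]²`. -/
def MuDistributedI (a b : ℕ → ℕ → ℝ) (μ : Measure (ℝ × ℝ)) : Prop :=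
  ∀ ψ : ℝ × ℝ → ℝ, ContinuousOn ψ (Set.Icc (0 : ℝ) 1 ×ˢ Set.Icc (0 : ℝ) 1) →
    Filter.Tendsto (fun k : ℕ => (1 / (k : ℝ)) * ∑ j ∈ Finset.range k, ψ (a k j, b k j))
      Filter.atTop (nhds (∫ p, ψ p ∂μ))

/-- `μ`-distributed on `ℝ²` (test functions: bounded continuous). -/
def MuDistributedR (a b : ℕ → ℕ → ℝ) (μ : Measure (ℝ × ℝ)) : Prop :=
  ∀ ψ : ℝ × ℝ → ℝ, Continuous ψ → (∃ C : ℝ, ∀ p, |ψ p| ≤ C) →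
    Filter.Tendsto (fun k : ℕ => (1 / (k : ℝ)) * ∑ j ∈ Finset.range k, ψ (a k j, b k j))
      Filter.atTop (nhds (∫ p, ψ p ∂μ))

/-- Tightness via closed bounded rectangles. -/
def TightRect (μ : Measure (ℝ × ℝ)) : Prop :=
  ∀ ε : ℝ, 0 < ε → ∃ x₁ x₂ y₁ y₂ : ℝ,
    μ ((Set.Icc x₁ x₂ ×ˢ Set.Icc y₁ y₂)ᶜ) < ENNReal.ofReal ε

/-- Almost everywhere increasing sequence of vectors. -/
def AEIncreasing (a : ℕ → ℕ → ℝ) : Prop :=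
  Filter.Tendsto
    (fun k : ℕ => (((Finset.range (k - 1)).filter fun i => a k i ≤ a k (i + 1)).card : ℝ) / k)
    Filter.atTop (nhds 1)

/-- Almost everywhere decreasing sequence of vectors. -/
def AEDecreasing (a : ℕ → ℕ → ℝ) : Prop :=
  Filter.Tendsto
    (fun k : ℕ => (((Finset.range (k - 1)).filter fun i => a k (i + 1) ≤ a k i).card : ℝ) / k)
    Filter.atTop (nhds 1)

/-- Almost everywhere monotone sequence of vectors. -/
def AEMonotone (a : ℕ → ℕ → ℝ) : Prop :=
  AEIncreasing a ∨ AEDecreasing a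

/-!
Averaged over the phase `t`, the quadratic form of a matrix at the plane waves `∑ⱼ e^{ijt} δⱼ` gives
its trace, so it suffices to know how the propagator `e^{isJ}` of a Jacobi matrix `J` acts on plane
waves. On a wave packet whose amplitude varies slowly, `J` acts up to a small residual as
multiplication by the symbol `a j + 2 (b j) cos t`. By Duhamel's principle `e^{isJ}` then acts
approximately as multiplication by `e^{is (a j + 2 (b j) cos t)}`.

Almost everywhere monotone coefficients, once truncated at a level `M`, have total variation `o(k)`,
which makes the residual negligible for plane waves cut off where the coefficients exceed `M`. The
cut-off part costs at most the limiting mass of the large coefficients, which vanishes as `M → ∞`.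
Hence the characteristic functions of the eigenvalue distributions converge to that of the law of
`x + 2 y cos t`, and Lévy's continuity theorem upgrades this to bounded continuous functions.
-/

section Propagator

open NormedSpace

theorem exp_mul_I_smul_mem_unitary {A : Type*} [NormedRing A] [NormedAlgebra ℂ A] [StarRing A]
    [ContinuousStar A] [CompleteSpace A] [StarModule ℂ A] {T : A} (hT : IsSelfAdjoint T) (s : ℝ) :
    exp ((s * Complex.I : ℂ) • T) ∈ unitary A := by
  have hskew : (s * Complex.I : ℂ) • T ∈ skewAdjoint A := by
    simp [skewAdjoint.mem_iff, star_smul, hT.star_eq]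
  let +nondep : NormedAlgebra ℚ A := .restrictScalars ℚ ℂ A
  exact exp_mem_unitary_of_mem_skewAdjoint hskew

theorem exp_smul_mul_exp_neg_smul {A : Type*} [NormedRing A] [NormedAlgebra ℂ A] [CompleteSpace A]
    (c : ℂ) (T : A) : exp (c • T) * exp (-c • T) = 1 := by
  let +nondep : NormedAlgebra ℚ A := .restrictScalars ℚ ℂ A
  rw [← exp_add_of_commute (((Commute.refl T).smul_left c).smul_right (-c)), ← add_smul,
    add_neg_cancel, zero_smul, exp_zero]

variable {H : Type*} [NormedAddCommGroup H] [InnerProductSpace ℂ H] [CompleteSpace H]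

theorem norm_exp_mul_I_smul_apply {T : H →L[ℂ] H} (hT : IsSelfAdjoint T) (s : ℝ) (x : H) :
    ‖exp ((s * Complex.I : ℂ) • T) x‖ = ‖x‖ :=
  ContinuousLinearMap.norm_map_of_mem_unitary (exp_mul_I_smul_mem_unitary hT s) x

theorem hasDerivAt_exp_neg_mul_I_smul_apply (T : H →L[ℂ] H) {w : ℝ → H} {w' : H} {σ : ℝ}
    (hw : HasDerivAt w w' σ) :
    HasDerivAt (fun τ : ℝ => exp (-(τ * Complex.I : ℂ) • T) (w τ))
      (exp (-(σ * Complex.I : ℂ) • T) (w' - Complex.I • T (w σ))) σ := by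
  have hline : HasDerivAt (fun τ : ℝ => -(τ * Complex.I : ℂ)) (-Complex.I) σ := by
    simpa using ((Complex.ofRealCLM.hasDerivAt (x := σ)).mul_const Complex.I).fun_neg
  have hexp := (hasDerivAt_exp_smul_const T (-(σ * Complex.I) : ℂ)).scomp σ hline
  have hexpR :=
    (ContinuousLinearMap.restrictScalarsL ℂ H H ℝ ℝ).hasFDerivAt.comp_hasDerivAt σ hexp
  convert! hexpR.clm_apply hw using 1
  simp [sub_eq_neg_add]

/-- Duhamel's principle: pulling `w` back along the unitary propagator turns the defect of the
equation `w' = i T w` into a derivative, which the mean value inequality integrates. -/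
theorem norm_exp_mul_I_smul_apply_sub_le {T : H →L[ℂ] H} (hT : IsSelfAdjoint T) {w w' : ℝ → H}
    {s E : ℝ} (hw : ∀ σ, HasDerivAt w (w' σ) σ)
    (hE : ∀ σ ∈ Set.uIcc 0 s, ‖w' σ - Complex.I • T (w σ)‖ ≤ E) :
    ‖exp ((s * Complex.I : ℂ) • T) (w 0) - w s‖ ≤ E * |s| := by
  have hdiff : ‖exp (-(s * Complex.I : ℂ) • T) (w s) - w 0‖ ≤ E * |s| := by
    have := (convex_uIcc (0 : ℝ) s).norm_image_sub_le_of_norm_hasDerivWithin_le (C := E)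
      (fun σ _ => (hasDerivAt_exp_neg_mul_I_smul_apply T (hw σ)).hasDerivWithinAt)
      (fun σ hσ => ?_) Set.left_mem_uIcc Set.right_mem_uIcc
    · simpa using this
    · rw [← neg_mul, ← Complex.ofReal_neg, norm_exp_mul_I_smul_apply hT]
      exact hE σ hσ
  have hinv : exp ((s * Complex.I : ℂ) • T) (exp (-(s * Complex.I : ℂ) • T) (w s)) = w s :=
    DFunLike.congr_fun (exp_smul_mul_exp_neg_smul (s * Complex.I : ℂ) T) (w s)
  calc ‖exp ((s * Complex.I : ℂ) • T) (w 0) - w s‖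
      = ‖exp ((s * Complex.I : ℂ) • T) (w 0 - exp (-(s * Complex.I : ℂ) • T) (w s))‖ := by
        rw [map_sub, hinv]
    _ = ‖exp (-(s * Complex.I : ℂ) • T) (w s) - w 0‖ := by
        rw [norm_exp_mul_I_smul_apply hT, norm_sub_rev]
    _ ≤ E * |s| := hdiff

end Propagator

section MatrixPropagator

open scoped Matrix.Norms.L2Operator

variable {n : Type*} [Fintype n] [DecidableEq n]

theorem trace_exp_smul_map_ofReal {A : Matrix n n ℝ} (hA : A.IsHermitian) (c : ℂ) :
    (NormedSpace.exp (c • A.map ((↑) : ℝ → ℂ))).trace =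
      ∑ i, Complex.exp (c * hA.eigenvalues i) := by
  let V : (Matrix n n ℂ)ˣ := Units.map (Complex.ofRealHom.mapMatrix (m := n)).toMonoidHom
    (Unitary.toUnits hA.eigenvectorUnitary)
  have hV : c • A.map ((↑) : ℝ → ℂ) = (V : Matrix n n ℂ) * Matrix.diagonal
      (fun i => c * (hA.eigenvalues i : ℂ)) * ((V⁻¹ : (Matrix n n ℂ)ˣ) : Matrix n n ℂ) := by
    have hspec := congrArg (fun B => c • Complex.ofRealHom.mapMatrix B) hA.spectral_theorem
    simp only [Unitary.conjStarAlgAut_apply, map_mul] at hspec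
    have hdiag : Matrix.diagonal (fun i => c * (hA.eigenvalues i : ℂ)) =
        c • Complex.ofRealHom.mapMatrix (Matrix.diagonal hA.eigenvalues) := by
      ext i j
      by_cases hij : i = j <;> simp [hij]
    rw [hdiag, Matrix.mul_smul, Matrix.smul_mul]
    exact hspec
  rw [hV, Matrix.exp_units_conj, Matrix.trace_units_conj, Matrix.exp_diagonal]
  simp [Matrix.trace, Pi.coe_exp, Complex.exp_eq_exp_ℂ]

theorem exp_smul_toEuclideanCLM (c : ℂ) (A : Matrix n n ℂ) :
    NormedSpace.exp (c • Matrix.toEuclideanCLM (n := n) (𝕜 := ℂ) A) =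
      Matrix.toEuclideanCLM (n := n) (𝕜 := ℂ) (NormedSpace.exp (c • A)) := by
  have hcont : Continuous (Matrix.toEuclideanCLM (n := n) (𝕜 := ℂ)) :=
    AddMonoidHomClass.continuous_of_bound _ 1 fun B => by rw [Matrix.cstar_norm_def, one_mul]
  let +nondep : NormedAlgebra ℚ (Matrix n n ℂ) := .restrictScalars ℚ ℂ _
  rw [NormedSpace.map_exp _ hcont, map_smul]

theorem isSelfAdjoint_toEuclideanCLM_map_ofReal {A : Matrix n n ℝ} (hA : A.IsHermitian) :
    IsSelfAdjoint (Matrix.toEuclideanCLM (n := n) (𝕜 := ℂ) (A.map ((↑) : ℝ → ℂ))) := by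
  have hAC : IsSelfAdjoint (A.map ((↑) : ℝ → ℂ)) :=
    hA.map _ fun x => (Complex.conj_ofReal x).symm
  exact hAC.map _

end MatrixPropagator

section Phase

/-- The uniform probability measure on the phase circle, realised on `(-π, π]`. -/
def phaseMeasure : Measure ℝ :=
  ENNReal.ofReal (2 * Real.pi)⁻¹ • volume.restrict (Set.Ioc (-Real.pi) Real.pi)

instance isProbabilityMeasure_phaseMeasure : IsProbabilityMeasure phaseMeasure := by
  refine ⟨?_⟩
  have hvol : Real.pi - -Real.pi = 2 * Real.pi := by ring
  rw [phaseMeasure, Measure.smul_apply, Measure.restrict_apply_univ, Real.volume_Ioc, hvol,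
    smul_eq_mul, ← ENNReal.ofReal_mul (by positivity), inv_mul_cancel₀ Real.two_pi_pos.ne',
    ENNReal.ofReal_one]

variable {E : Type*} [NormedAddCommGroup E]

theorem integrable_phaseMeasure_of_continuous {f : ℝ → E} (hf : Continuous f) :
    Integrable f phaseMeasure :=
  hf.integrableOn_Ioc.smul_measure ENNReal.ofReal_ne_top

variable [NormedSpace ℝ E]

theorem integral_phaseMeasure (f : ℝ → E) :
    ∫ t, f t ∂phaseMeasure = (2 * Real.pi)⁻¹ • ∫ t in (-Real.pi)..Real.pi, f t := by
  rw [phaseMeasure, integral_smul_measure, ENNReal.toReal_ofReal (by positivity),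
    intervalIntegral.integral_of_le (by linarith [Real.pi_pos])]

theorem integral_phaseMeasure_comp_cos {f : ℝ → E} (hf : Continuous f) :
    ∫ t, f (Real.cos t) ∂phaseMeasure =
      (1 / Real.pi) • ∫ t in (0 : ℝ)..Real.pi, f (Real.cos t) := by
  have hfc : Continuous fun t => f (Real.cos t) := hf.comp Real.continuous_cos
  have heven : ∫ t in (-Real.pi)..0, f (Real.cos t) = ∫ t in (0 : ℝ)..Real.pi, f (Real.cos t) := by
    simpa using intervalIntegral.integral_comp_neg (a := -Real.pi) (b := 0) fun t => f (Real.cos t)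
  rw [integral_phaseMeasure, ← intervalIntegral.integral_add_adjacent_intervals
    (hfc.intervalIntegrable (-Real.pi) 0) (hfc.intervalIntegrable 0 Real.pi), heven, ← two_smul ℝ,
    smul_smul]
  congr 1
  field_simp

theorem integral_exp_intCast_mul_I_phaseMeasure (n : ℤ) :
    ∫ t : ℝ, Complex.exp (n * t * Complex.I) ∂phaseMeasure = if n = 0 then 1 else 0 := by
  split_ifs with hn
  · simp [hn]
  · have hnI : (n * Complex.I : ℂ) ≠ 0 := by simp [hn]
    have hends : Complex.exp (n * Complex.I * (Real.pi : ℝ)) =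
        Complex.exp (n * Complex.I * (-Real.pi : ℝ)) :=
      Complex.exp_eq_exp_iff_exists_int.2 ⟨n, by push_cast; ring⟩
    simp only [integral_phaseMeasure, mul_right_comm _ _ Complex.I, integral_exp_mul_complex hnI,
      hends, sub_self, zero_div, smul_zero]

end Phase

section Symbol

/-- The symbol `θ ↦ x + 2 y cos θ` of the Jacobi operator with constant coefficients `(x, y)`. -/
def jacobiSymbol (p : ℝ × ℝ) (t : ℝ) : ℝ := p.1 + 2 * p.2 * Real.cos t

theorem continuous_uncurry_jacobiSymbol : Continuous (Function.uncurry jacobiSymbol) := by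
  unfold jacobiSymbol
  fun_prop

/-- The law of `x + 2 y cos θ` for `(x, y)` distributed as `μ` and an independent uniform
phase `θ`; it is the limiting eigenvalue distribution. -/
def symbolMeasure (μ : Measure (ℝ × ℝ)) : Measure ℝ :=
  (μ.prod phaseMeasure).map (Function.uncurry jacobiSymbol)

instance isProbabilityMeasure_symbolMeasure (μ : Measure (ℝ × ℝ)) [IsProbabilityMeasure μ] :
    IsProbabilityMeasure (symbolMeasure μ) :=
  Measure.isProbabilityMeasure_map continuous_uncurry_jacobiSymbol.aemeasurable

variable {E : Type*} [NormedAddCommGroup E] [NormedSpace ℝ E]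

/-- The mean of `f` along the symbol with coefficients `p`. -/
def symbolMean (f : ℝ → E) (p : ℝ × ℝ) : E := ∫ t, f (jacobiSymbol p t) ∂phaseMeasure

theorem symbolMean_eq_intervalIntegral {f : ℝ → E} (hf : Continuous f) (p : ℝ × ℝ) :
    symbolMean f p =
      (1 / Real.pi) • ∫ t in (0 : ℝ)..Real.pi, f (p.1 + 2 * p.2 * Real.cos t) :=
  integral_phaseMeasure_comp_cos (f := fun c => f (p.1 + 2 * p.2 * c)) (by fun_prop)

variable {f : ℝ → E} {C : ℝ}

theorem norm_symbolMean_le (hC : ∀ x, ‖f x‖ ≤ C) (p : ℝ × ℝ) : ‖symbolMean f p‖ ≤ C := by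
  simpa [symbolMean] using norm_integral_le_of_norm_le_const (μ := phaseMeasure)
    (Eventually.of_forall fun t => hC (jacobiSymbol p t))

theorem continuous_symbolMean (hf : Continuous f) (hC : ∀ x, ‖f x‖ ≤ C) :
    Continuous (symbolMean f) := by
  have hjoint := hf.comp continuous_uncurry_jacobiSymbol
  refine continuous_of_dominated (bound := fun _ => C)
    (fun p => (hjoint.comp (Continuous.prodMk_right p)).aestronglyMeasurable)
    (fun p => Eventually.of_forall fun t => hC _) (integrable_const C)
    (Eventually.of_forall fun t => hjoint.comp (Continuous.prodMk_left t))

theorem integral_symbolMeasure (μ : Measure (ℝ × ℝ)) [IsFiniteMeasure μ] (hf : Continuous f)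
    (hC : ∀ x, ‖f x‖ ≤ C) :
    ∫ x, f x ∂(symbolMeasure μ) = ∫ p, symbolMean f p ∂μ := by
  have hint : Integrable (f ∘ Function.uncurry jacobiSymbol) (μ.prod phaseMeasure) :=
    .of_bound (hf.comp continuous_uncurry_jacobiSymbol).aestronglyMeasurable C
      (Eventually.of_forall fun q => hC _)
  rw [symbolMeasure, integral_map continuous_uncurry_jacobiSymbol.aemeasurable
    hf.aestronglyMeasurable]
  exact integral_prod _ hint

end Symbol

section WavePacket

open scoped InnerProductSpace

/-- The wave packet `∑ⱼ e^{ijt} u j • δⱼ` on `Fin k`: the plane wave of phase `t`, modulated by the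
amplitude `u`. -/
def wavePacket (k : ℕ) (t : ℝ) (u : ℕ → ℂ) : EuclideanSpace ℂ (Fin k) :=
  WithLp.toLp 2 fun j => Complex.exp ((j : ℕ) * t * Complex.I) * u j

theorem wavePacket_apply (k : ℕ) (t : ℝ) (u : ℕ → ℂ) (j : Fin k) :
    wavePacket k t u j = Complex.exp ((j : ℕ) * t * Complex.I) * u j := rfl

theorem wavePacket_sub (k : ℕ) (t : ℝ) (u v : ℕ → ℂ) :
    wavePacket k t (u - v) = wavePacket k t u - wavePacket k t v := by
  ext j
  simp [wavePacket_apply, mul_sub]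

theorem wavePacket_smul (k : ℕ) (t : ℝ) (c : ℂ) (u : ℕ → ℂ) :
    wavePacket k t (c • u) = c • wavePacket k t u := by
  ext j
  simp [wavePacket_apply, mul_left_comm]

theorem inner_wavePacket (k : ℕ) (t : ℝ) (u v : ℕ → ℂ) :
    ⟪wavePacket k t u, wavePacket k t v⟫_ℂ = ∑ j ∈ Finset.range k, (starRingEnd ℂ) (u j) * v j := by
  rw [← Fin.sum_univ_eq_sum_range fun j => (starRingEnd ℂ) (u j) * v j, PiLp.inner_apply]
  refine Finset.sum_congr rfl fun j _ => ?_
  have hphase : (starRingEnd ℂ) (Complex.exp ((j : ℕ) * t * Complex.I)) *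
      Complex.exp ((j : ℕ) * t * Complex.I) = 1 := by
    simp [← Complex.exp_conj, ← Complex.exp_add]
  rw [wavePacket_apply, wavePacket_apply, RCLike.inner_apply', map_mul]
  linear_combination (starRingEnd ℂ) (u j) * v j * hphase

theorem norm_sq_wavePacket (k : ℕ) (t : ℝ) (u : ℕ → ℂ) :
    ‖wavePacket k t u‖ ^ 2 = ∑ j ∈ Finset.range k, ‖u j‖ ^ 2 := by
  have h := inner_self_eq_norm_sq_to_K (𝕜 := ℂ) (wavePacket k t u)
  simp only [inner_wavePacket, Complex.conj_mul'] at h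
  exact (Complex.ofReal_injective (by simpa using h)).symm

theorem hasDerivAt_wavePacket {k : ℕ} {t σ : ℝ} {u : ℝ → ℕ → ℂ} {u' : ℕ → ℂ}
    (hu : ∀ j, HasDerivAt (fun τ => u τ j) (u' j) σ) :
    HasDerivAt (fun τ => wavePacket k t (u τ)) (wavePacket k t u') σ :=
  (PiLp.continuousLinearEquiv 2 ℝ fun _ : Fin k => ℂ).symm.hasFDerivAt.comp_hasDerivAt σ
    (hasDerivAt_pi.2 fun j => (hu j).const_mul _)

/-- Averaging over the phase removes the off-diagonal entries, so plane waves compute traces. -/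
theorem integral_inner_toEuclideanCLM_wavePacket_one {k : ℕ} (B : Matrix (Fin k) (Fin k) ℂ) :
    ∫ t, ⟪wavePacket k t 1, Matrix.toEuclideanCLM (n := Fin k) (𝕜 := ℂ) B (wavePacket k t 1)⟫_ℂ
      ∂phaseMeasure = B.trace := by
  have hexpand (t : ℝ) :
      ⟪wavePacket k t 1, Matrix.toEuclideanCLM (n := Fin k) (𝕜 := ℂ) B (wavePacket k t 1)⟫_ℂ =
        ∑ i : Fin k, ∑ j : Fin k,
          B i j * Complex.exp (((j : ℤ) - (i : ℤ) : ℤ) * t * Complex.I) := by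
    rw [wavePacket, Matrix.toEuclideanCLM_toLp, PiLp.inner_apply]
    refine Finset.sum_congr rfl fun i _ => ?_
    simp only [RCLike.inner_apply, Matrix.mulVec, dotProduct, Finset.sum_mul]
    refine Finset.sum_congr rfl fun j _ => ?_
    have hphase : Complex.exp ((j : ℕ) * t * Complex.I) *
        (starRingEnd ℂ) (Complex.exp ((i : ℕ) * t * Complex.I)) =
          Complex.exp (((j : ℤ) - (i : ℤ) : ℤ) * t * Complex.I) := by
      rw [← Complex.exp_conj, ← Complex.exp_add]
      congr 1
      simp
      ring
    simp only [Pi.one_apply, mul_one, mul_assoc (B i j), hphase]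
  have hint (i j : Fin k) : Integrable
      (fun t : ℝ => B i j * Complex.exp (((j : ℤ) - (i : ℤ) : ℤ) * t * Complex.I)) phaseMeasure :=
    integrable_phaseMeasure_of_continuous (by fun_prop)
  simp only [hexpand]
  rw [integral_finsetSum _ fun i _ => integrable_finsetSum _ fun j _ => hint i j]
  refine Finset.sum_congr rfl fun i _ => ?_
  rw [integral_finsetSum _ fun j _ => hint i j]
  simp only [integral_const_mul, integral_exp_intCast_mul_I_phaseMeasure, sub_eq_zero,
    Nat.cast_inj, Fin.val_inj]
  simp

end WavePacket

section JacobiOperator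

/-- The Jacobi matrix acting on the Hilbert space `ℂᵏ`. -/
def jacobiOperator (k : ℕ) (a b : ℕ → ℝ) :
    EuclideanSpace ℂ (Fin k) →L[ℂ] EuclideanSpace ℂ (Fin k) :=
  Matrix.toEuclideanCLM (n := Fin k) (𝕜 := ℂ) ((jacobiMatrix k a b).map (↑))

/-- The error made by replacing the action of a Jacobi matrix on a wave packet with amplitude `u`
by pointwise multiplication with its symbol. -/
def symbolResidual (k : ℕ) (b : ℕ → ℝ) (t : ℝ) (u : ℕ → ℂ) (i : ℕ) : ℂ :=
  Complex.exp (t * Complex.I) * (b i * ((if i + 1 < k then u (i + 1) else 0) - u i)) +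
    Complex.exp (-t * Complex.I) * ((if 0 < i then b (i - 1) * u (i - 1) else 0) - b i * u i)

theorem sum_jacobiMatrix_mul (k : ℕ) (a b : ℕ → ℝ) (f : ℕ → ℂ) (i : Fin k) :
    ∑ j : Fin k, (jacobiMatrix k a b i j : ℂ) * f j =
      a i * f i + (if (i : ℕ) + 1 < k then b i * f (i + 1) else 0) +
        (if 0 < (i : ℕ) then b (i - 1) * f (i - 1) else 0) := by
  have hentry (j : Fin k) : (jacobiMatrix k a b i j : ℂ) * f j =
      (if (i : ℕ) = j then a i * f i else 0) +
        (if (i : ℕ) + 1 = j then b i * f (i + 1) else 0) +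
        (if (i : ℕ) - 1 = j then if 0 < (i : ℕ) then b (i - 1) * f (i - 1) else 0 else 0) := by
    simp only [jacobiMatrix, Matrix.of_apply]
    obtain ⟨i, hi⟩ := i
    obtain ⟨j, hj⟩ := j
    cases i <;> grind [Complex.ofReal_zero]
  have hcol (n : ℕ) (c : ℂ) : (∑ j : Fin k, if n = (j : ℕ) then c else 0) =
      if n < k then c else 0 := by
    rw [Fin.sum_univ_eq_sum_range (fun j => if n = j then c else 0) k]
    simp
  simp only [hentry, Finset.sum_add_distrib, hcol, i.isLt, if_true,
    (Nat.sub_le i 1).trans_lt i.isLt]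

theorem jacobiOperator_wavePacket (k : ℕ) (a b : ℕ → ℝ) (t : ℝ) (u : ℕ → ℂ) :
    jacobiOperator k a b (wavePacket k t u) =
      wavePacket k t (fun i => jacobiSymbol (a i, b i) t * u i) +
        wavePacket k t (symbolResidual k b t u) := by
  have hcos : (2 * Real.cos t : ℂ) =
      Complex.exp (t * Complex.I) + Complex.exp (-t * Complex.I) := by
    rw [Complex.ofReal_cos, Complex.two_cos]
  have hsucc (j : ℕ) : Complex.exp ((j + 1 : ℕ) * t * Complex.I) =
      Complex.exp (j * t * Complex.I) * Complex.exp (t * Complex.I) := by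
    rw [← Complex.exp_add]
    congr 1
    push_cast
    ring
  have hpred {j : ℕ} (hj : 0 < j) : Complex.exp ((j - 1 : ℕ) * t * Complex.I) =
      Complex.exp (j * t * Complex.I) * Complex.exp (-t * Complex.I) := by
    rw [← Complex.exp_add, Nat.cast_pred hj]
    congr 1
    ring
  ext i
  change ∑ j : Fin k, (jacobiMatrix k a b i j : ℂ) * (Complex.exp (j * t * Complex.I) * u j) = _
  rw [sum_jacobiMatrix_mul k a b fun j => Complex.exp (j * t * Complex.I) * u j]
  simp only [PiLp.add_apply, wavePacket_apply, jacobiSymbol, symbolResidual, Complex.ofReal_add,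
    Complex.ofReal_mul, Complex.ofReal_ofNat, hsucc]
  set e := Complex.exp (i * t * Complex.I)
  by_cases hi : 0 < (i : ℕ)
  · simp only [hi, if_true, hpred hi]
    split_ifs <;> linear_combination -(e * b i * u i) * hcos
  · simp only [hi, if_false]
    split_ifs <;> linear_combination -(e * b i * u i) * hcos

end JacobiOperator

section Variation

variable {E : Type*} [NormedAddCommGroup E]

/-- The total variation of the first `k` terms of a sequence. -/
def variation (k : ℕ) (x : ℕ → E) : ℝ := ∑ i ∈ Finset.range (k - 1), ‖x (i + 1) - x i‖

theorem variation_nonneg (k : ℕ) (x : ℕ → E) : 0 ≤ variation k x :=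
  Finset.sum_nonneg fun _ _ => norm_nonneg _

theorem variation_neg (k : ℕ) (x : ℕ → E) : variation k (fun i => -x i) = variation k x :=
  Finset.sum_congr rfl fun i _ => by rw [neg_sub_neg, norm_sub_rev]

theorem variation_le_mul {F : Type*} [NormedAddCommGroup F] {x : ℕ → E} {y : ℕ → F} {C : ℝ}
    (h : ∀ i j, ‖x i - x j‖ ≤ C * ‖y i - y j‖) (k : ℕ) : variation k x ≤ C * variation k y := by
  rw [variation, variation, Finset.mul_sum]
  exact Finset.sum_le_sum fun i _ => h (i + 1) i

theorem variation_add_le (k : ℕ) (x y : ℕ → E) :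
    variation k (x + y) ≤ variation k x + variation k y := by
  simp only [variation, ← Finset.sum_add_distrib]
  refine Finset.sum_le_sum fun i _ => ?_
  simpa [add_sub_add_comm] using norm_add_le (x (i + 1) - x i) (y (i + 1) - y i)

theorem variation_mul_le {R : Type*} [NormedRing R] {x y : ℕ → R} {A B : ℝ}
    (hx : ∀ i, ‖x i‖ ≤ A) (hy : ∀ i, ‖y i‖ ≤ B) (k : ℕ) :
    variation k (x * y) ≤ A * variation k y + B * variation k x := by
  simp only [variation, Finset.mul_sum, ← Finset.sum_add_distrib]
  refine Finset.sum_le_sum fun i _ => ?_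
  have hsplit : (x * y) (i + 1) - (x * y) i =
      x (i + 1) * (y (i + 1) - y i) + (x (i + 1) - x i) * y i := by
    simp only [Pi.mul_apply]
    noncomm_ring
  calc ‖(x * y) (i + 1) - (x * y) i‖
      ≤ ‖x (i + 1)‖ * ‖y (i + 1) - y i‖ + ‖x (i + 1) - x i‖ * ‖y i‖ := by
        rw [hsplit]
        exact norm_add_le_of_le (norm_mul_le _ _) (norm_mul_le _ _)
    _ ≤ A * ‖y (i + 1) - y i‖ + B * ‖x (i + 1) - x i‖ := by
        rw [mul_comm B]
        gcongr
        exacts [hx _, hy _]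

theorem variation_comp_pred_le (k : ℕ) (x : ℕ → E) :
    variation k (fun i => x (i - 1)) ≤ variation k x := by
  rcases Nat.eq_zero_or_pos (k - 1) with hk | hk
  · simp [variation, hk]
  · obtain ⟨n, hn⟩ := Nat.exists_eq_succ_of_ne_zero hk.ne'
    simp only [variation, hn]
    rw [Finset.sum_range_succ', Finset.sum_range_succ]
    simp

theorem sum_norm_ite_succ_sub_le {x : ℕ → E} {C : ℝ} (hC : ∀ i, ‖x i‖ ≤ C) (k : ℕ) :
    ∑ i ∈ Finset.range k, ‖(if i + 1 < k then x (i + 1) else 0) - x i‖ ≤ variation k x + C := by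
  cases k with
  | zero => simpa [variation] using (norm_nonneg _).trans (hC 0)
  | succ n =>
    rw [Finset.sum_range_succ, variation, Nat.add_sub_cancel]
    refine add_le_add (Finset.sum_le_sum fun i hi => ?_) (by simpa using hC n)
    simp [Finset.mem_range.1 hi]

theorem sum_norm_ite_pred_sub_le {x : ℕ → E} {C : ℝ} (hC : ∀ i, ‖x i‖ ≤ C) (k : ℕ) :
    ∑ i ∈ Finset.range k, ‖(if 0 < i then x (i - 1) else 0) - x i‖ ≤ variation k x + C := by
  cases k with
  | zero => simpa [variation] using (norm_nonneg _).trans (hC 0)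
  | succ n =>
    rw [Finset.sum_range_succ', variation, Nat.add_sub_cancel]
    refine add_le_add (Finset.sum_le_sum fun i _ => ?_) (by simpa using hC 0)
    simp [norm_sub_rev]

theorem variation_le_of_abs_le {x : ℕ → ℝ} {M : ℝ} (hx : ∀ i, |x i| ≤ M) (k : ℕ) :
    variation k x ≤
      2 * M + 4 * M * (k - ((Finset.range (k - 1)).filter fun i => x i ≤ x (i + 1)).card) := by
  have hM : 0 ≤ M := (abs_nonneg _).trans (hx 0)
  have hstep (i : ℕ) : ‖x (i + 1) - x i‖ ≤
      (x (i + 1) - x i) + 4 * M * (1 - if x i ≤ x (i + 1) then 1 else 0) := by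
    rw [Real.norm_eq_abs]
    split_ifs with hi
    · rw [abs_of_nonneg (sub_nonneg.2 hi)]
      simp
    · rw [abs_of_neg (by linarith)]
      linarith [abs_le.1 (hx i), abs_le.1 (hx (i + 1))]
  have hlast : x (k - 1) - x 0 ≤ 2 * M := by linarith [abs_le.1 (hx 0), abs_le.1 (hx (k - 1))]
  have hpred : ((k - 1 : ℕ) : ℝ) ≤ k := mod_cast Nat.sub_le k 1
  calc variation k x
      ≤ ∑ i ∈ Finset.range (k - 1),
          ((x (i + 1) - x i) + 4 * M * (1 - if x i ≤ x (i + 1) then 1 else 0)) :=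
        Finset.sum_le_sum fun i _ => hstep i
    _ = (x (k - 1) - x 0) + 4 * M * ((k - 1 : ℕ) -
          ((Finset.range (k - 1)).filter fun i => x i ≤ x (i + 1)).card) := by
        rw [Finset.sum_add_distrib, Finset.sum_range_sub, ← Finset.mul_sum,
          Finset.sum_sub_distrib, Finset.sum_boole]
        simp
    _ ≤ _ := by gcongr

end Variation

section Residual

variable {M : ℝ} {b : ℕ → ℝ} {u : ℕ → ℂ}

theorem symbolResidual_congr {b' : ℕ → ℝ} (hself : ∀ i, (b i : ℂ) * u i = b' i * u i)
    (hsucc : ∀ i, (b i : ℂ) * u (i + 1) = b' i * u (i + 1)) (k : ℕ) (t : ℝ) :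
    symbolResidual k b t u = symbolResidual k b' t u := by
  funext i
  simp only [symbolResidual, mul_sub, mul_ite, mul_zero, hself, hsucc]

theorem norm_symbolResidual_le (k : ℕ) (b : ℕ → ℝ) (t : ℝ) (u : ℕ → ℂ) (i : ℕ) :
    ‖symbolResidual k b t u i‖ ≤ |b i| * ‖(if i + 1 < k then u (i + 1) else 0) - u i‖ +
      ‖(if 0 < i then b (i - 1) * u (i - 1) else 0) - b i * u i‖ := by
  have hneg : ‖Complex.exp (-t * Complex.I)‖ = 1 := by
    rw [← Complex.ofReal_neg, Complex.norm_exp_ofReal_mul_I]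
  refine (norm_add_le _ _).trans_eq ?_
  rw [norm_mul, norm_mul, norm_mul, Complex.norm_exp_ofReal_mul_I, hneg, one_mul, one_mul,
    Complex.norm_real, Real.norm_eq_abs]

theorem norm_mul_amplitude_le (hb : ∀ i, |b i| ≤ M) (hu : ∀ i, ‖u i‖ ≤ 1) (i : ℕ) :
    ‖(b i : ℂ) * u i‖ ≤ M := by
  simpa using mul_le_mul (hb i) (hu i) (norm_nonneg _) ((abs_nonneg _).trans (hb i))

theorem norm_symbolResidual_le_const (hb : ∀ i, |b i| ≤ M) (hu : ∀ i, ‖u i‖ ≤ 1) (k : ℕ) (t : ℝ)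
    (i : ℕ) : ‖symbolResidual k b t u i‖ ≤ 4 * M := by
  have hM : 0 ≤ M := (abs_nonneg _).trans (hb 0)
  have hbu := norm_mul_amplitude_le hb hu
  have hsucc : ‖(if i + 1 < k then u (i + 1) else 0) - u i‖ ≤ 1 + 1 :=
    norm_sub_le_of_le (by split_ifs; exacts [hu _, by simp]) (hu i)
  have hpred : ‖(if 0 < i then (b (i - 1) : ℂ) * u (i - 1) else 0) - b i * u i‖ ≤ M + M :=
    norm_sub_le_of_le (by split_ifs; exacts [hbu _, by simpa]) (hbu i)
  have := mul_le_mul (hb i) hsucc (norm_nonneg _) hM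
  linarith [norm_symbolResidual_le k b t u i]

theorem sum_norm_symbolResidual_le (hb : ∀ i, |b i| ≤ M) (hu : ∀ i, ‖u i‖ ≤ 1) (k : ℕ) (t : ℝ) :
    ∑ i ∈ Finset.range k, ‖symbolResidual k b t u i‖ ≤
      2 * M + 2 * M * variation k u + variation k b := by
  have hM : 0 ≤ M := (abs_nonneg _).trans (hb 0)
  have hvar : variation k (fun i => (b i : ℂ) * u i) ≤ M * variation k u + 1 * variation k b := by
    have hreal : variation k (fun i => (b i : ℂ)) = variation k b := by
      simp only [variation, ← Complex.ofReal_sub, Complex.norm_real]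
    rw [← hreal]
    exact variation_mul_le (fun i => by simpa using hb i) hu k
  calc ∑ i ∈ Finset.range k, ‖symbolResidual k b t u i‖
      ≤ ∑ i ∈ Finset.range k, (M * ‖(if i + 1 < k then u (i + 1) else 0) - u i‖ +
          ‖(if 0 < i then (b (i - 1) : ℂ) * u (i - 1) else 0) - b i * u i‖) := by
        refine Finset.sum_le_sum fun i _ => (norm_symbolResidual_le k b t u i).trans ?_
        gcongr
        exact hb i
    _ ≤ M * (variation k u + 1) + (variation k (fun i => (b i : ℂ) * u i) + M) := by
        rw [Finset.sum_add_distrib, ← Finset.mul_sum]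
        gcongr
        · exact sum_norm_ite_succ_sub_le hu k
        · exact sum_norm_ite_pred_sub_le (norm_mul_amplitude_le hb hu) k
    _ ≤ 2 * M + 2 * M * variation k u + variation k b := by linarith

theorem norm_sq_wavePacket_symbolResidual_le (hb : ∀ i, |b i| ≤ M) (hu : ∀ i, ‖u i‖ ≤ 1) (k : ℕ)
    (t : ℝ) :
    ‖wavePacket k t (symbolResidual k b t u)‖ ^ 2 ≤
      4 * M * (2 * M + 2 * M * variation k u + variation k b) := by
  have hM : 0 ≤ M := (abs_nonneg _).trans (hb 0)
  calc ‖wavePacket k t (symbolResidual k b t u)‖ ^ 2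
      ≤ ∑ i ∈ Finset.range k, 4 * M * ‖symbolResidual k b t u i‖ := by
        rw [norm_sq_wavePacket]
        refine Finset.sum_le_sum fun i _ => ?_
        rw [sq]
        gcongr
        exact norm_symbolResidual_le_const hb hu k t i
    _ ≤ 4 * M * (2 * M + 2 * M * variation k u + variation k b) := by
        rw [← Finset.mul_sum]
        gcongr
        exact sum_norm_symbolResidual_le hb hu k t

end Residual

section Cutoff

/-- The truncation of `x` to `[-M, M]`, for `0 ≤ M`. -/
def clamp (M x : ℝ) : ℝ := max (-M) (min M x)

variable {M : ℝ}

theorem monotone_clamp (M : ℝ) : Monotone (clamp M) := fun _ _ h =>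
  max_le_max le_rfl (min_le_min le_rfl h)

@[fun_prop]
theorem continuous_clamp (M : ℝ) : Continuous (clamp M) := by
  unfold clamp
  fun_prop

theorem abs_clamp_le (hM : 0 ≤ M) (x : ℝ) : |clamp M x| ≤ M :=
  abs_le.2 ⟨le_max_left _ _, max_le (by linarith) (min_le_left _ _)⟩

theorem clamp_eq_self {x : ℝ} (hx : |x| ≤ M) : clamp M x = x := by
  rw [clamp, min_eq_right (abs_le.1 hx).2, max_eq_right (abs_le.1 hx).1]

/-- A continuous cutoff with values in `[0, 1]` for `0 ≤ M`, supported in `[-M, M]` and equal to `1`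
on `[1 - M, M - 1]`. It factors through `clamp M`, which makes it have small variation along a
sequence whose truncation does. -/
def cutoff (M x : ℝ) : ℝ := min 1 (M - |clamp M x|)

@[fun_prop]
theorem continuous_cutoff (M : ℝ) : Continuous (cutoff M) := by
  unfold cutoff
  fun_prop

theorem cutoff_nonneg (hM : 0 ≤ M) (x : ℝ) : 0 ≤ cutoff M x :=
  le_min zero_le_one (sub_nonneg.2 (abs_clamp_le hM x))

theorem cutoff_le_one (M x : ℝ) : cutoff M x ≤ 1 := min_le_left _ _

theorem cutoff_eq_one {x : ℝ} (hx : |x| + 1 ≤ M) : cutoff M x = 1 := by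
  rw [cutoff, clamp_eq_self (by linarith), min_eq_left (by linarith)]

theorem clamp_eq_self_of_cutoff_ne_zero (hM : 0 ≤ M) {x : ℝ} (hx : cutoff M x ≠ 0) :
    clamp M x = x := by
  refine clamp_eq_self (not_lt.1 fun hlt => hx ?_)
  have hclamp : |clamp M x| = M := by
    rcases lt_abs.1 hlt with hlt | hlt
    · rw [clamp, min_eq_left hlt.le, max_eq_right (by linarith), abs_of_nonneg hM]
    · rw [clamp, min_eq_right (by linarith), max_eq_left (by linarith), abs_neg, abs_of_nonneg hM]
  simp [cutoff, hclamp]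

theorem abs_cutoff_sub_cutoff_le (M x y : ℝ) :
    |cutoff M x - cutoff M y| ≤ |clamp M x - clamp M y| := by
  calc |cutoff M x - cutoff M y|
      ≤ |(|clamp M y| - |clamp M x|)| := by
        simpa [cutoff] using abs_min_sub_min_le_max 1 (M - |clamp M x|) 1 (M - |clamp M y|)
    _ ≤ |clamp M y - clamp M x| := abs_abs_sub_abs_le _ _
    _ = |clamp M x - clamp M y| := abs_sub_comm _ _

end Cutoff

section Amplitude

/-- The amplitude `c` evolved for time `σ` under pointwise multiplication by the symbol. -/
def amplitude (a b : ℕ → ℝ) (c : ℕ → ℂ) (t σ : ℝ) (j : ℕ) : ℂ :=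
  c j * Complex.exp (σ * jacobiSymbol (a j, b j) t * Complex.I)

theorem norm_amplitude (a b : ℕ → ℝ) (c : ℕ → ℂ) (t σ : ℝ) (j : ℕ) :
    ‖amplitude a b c t σ j‖ = ‖c j‖ := by
  rw [amplitude, norm_mul, ← Complex.ofReal_mul, Complex.norm_exp_ofReal_mul_I, mul_one]

theorem amplitude_zero (a b : ℕ → ℝ) (c : ℕ → ℂ) (t : ℝ) : amplitude a b c t 0 = c := by
  ext j
  simp [amplitude]

theorem amplitude_sub (a b : ℕ → ℝ) (c d : ℕ → ℂ) (t σ : ℝ) :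
    amplitude a b (c - d) t σ = amplitude a b c t σ - amplitude a b d t σ := by
  ext j
  simp [amplitude, sub_mul]

theorem hasDerivAt_amplitude (a b : ℕ → ℝ) (c : ℕ → ℂ) (t σ : ℝ) (j : ℕ) :
    HasDerivAt (fun τ => amplitude a b c t τ j)
      ((Complex.I • fun i => jacobiSymbol (a i, b i) t * amplitude a b c t σ i) j) σ := by
  have hphase := ((Complex.ofRealCLM.hasDerivAt (x := σ)).mul_const
    ((jacobiSymbol (a j, b j) t : ℂ))).mul_const Complex.I
  refine (hphase.cexp.const_mul (c j)).congr_deriv ?_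
  simp [amplitude]
  ring

theorem norm_exp_mul_I_sub_exp_mul_I_le (x y : ℝ) :
    ‖Complex.exp (x * Complex.I) - Complex.exp (y * Complex.I)‖ ≤ ‖x - y‖ := by
  have hfactor : Complex.exp (x * Complex.I) - Complex.exp (y * Complex.I) =
      Complex.exp (y * Complex.I) * (Complex.exp (Complex.I * (x - y : ℝ)) - 1) := by
    rw [mul_sub, ← Complex.exp_add, mul_one]
    congr 2
    push_cast
    ring
  rw [hfactor, norm_mul, Complex.norm_exp_ofReal_mul_I, one_mul]
  exact Real.norm_exp_I_mul_ofReal_sub_one_le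

theorem variation_jacobiSymbol_le (k : ℕ) (a b : ℕ → ℝ) (t : ℝ) :
    variation k (fun j => jacobiSymbol (a j, b j) t) ≤ variation k a + 2 * variation k b := by
  refine (variation_add_le k a fun j => 2 * b j * Real.cos t).trans ?_
  gcongr
  refine variation_le_mul (fun i j => ?_) k
  rw [← sub_mul, ← mul_sub, norm_mul, norm_mul, Real.norm_ofNat]
  exact mul_le_of_le_one_right (by positivity) (Real.abs_cos_le_one t)

theorem variation_amplitude_le {a b : ℕ → ℝ} {c : ℕ → ℂ} (hc : ∀ j, ‖c j‖ ≤ 1) (k : ℕ) (t σ : ℝ) :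
    variation k (amplitude a b c t σ) ≤
      |σ| * (variation k a + 2 * variation k b) + variation k c := by
  have hexp : variation k (fun j => Complex.exp (σ * jacobiSymbol (a j, b j) t * Complex.I)) ≤
      |σ| * variation k (fun j => jacobiSymbol (a j, b j) t) := by
    refine variation_le_mul (fun i j => ?_) k
    simp only [← Complex.ofReal_mul]
    refine (norm_exp_mul_I_sub_exp_mul_I_le _ _).trans_eq ?_
    rw [← mul_sub, norm_mul, Real.norm_eq_abs]
  have hnorm (j : ℕ) : ‖Complex.exp (σ * jacobiSymbol (a j, b j) t * Complex.I)‖ ≤ 1 := by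
    rw [← Complex.ofReal_mul, Complex.norm_exp_ofReal_mul_I]
  calc variation k (amplitude a b c t σ)
      ≤ 1 * variation k (fun j => Complex.exp (σ * jacobiSymbol (a j, b j) t * Complex.I)) +
          1 * variation k c := variation_mul_le hc hnorm k
    _ ≤ |σ| * (variation k a + 2 * variation k b) + variation k c := by
        rw [one_mul, one_mul]
        gcongr
        exact hexp.trans (by gcongr; exact variation_jacobiSymbol_le k a b t)

end Amplitude

section CutoffWeight

variable {M : ℝ}

/-- The amplitude that vanishes where one of the Jacobi coefficients involved in the rows `j - 1`
and `j` exceeds `M`. At `j = 0` the truncated subtraction repeats the factor `cutoff M (b 0)`. -/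
def cutoffWeight (M : ℝ) (a b : ℕ → ℝ) (j : ℕ) : ℝ :=
  cutoff M (a j) * cutoff M (b j) * cutoff M (b (j - 1))

theorem cutoffWeight_nonneg (hM : 0 ≤ M) (a b : ℕ → ℝ) (j : ℕ) : 0 ≤ cutoffWeight M a b j :=
  mul_nonneg (mul_nonneg (cutoff_nonneg hM _) (cutoff_nonneg hM _)) (cutoff_nonneg hM _)

theorem cutoffWeight_le_one (hM : 0 ≤ M) (a b : ℕ → ℝ) (j : ℕ) : cutoffWeight M a b j ≤ 1 :=
  mul_le_one₀ (mul_le_one₀ (cutoff_le_one _ _) (cutoff_nonneg hM _) (cutoff_le_one _ _))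
    (cutoff_nonneg hM _) (cutoff_le_one _ _)

theorem norm_cutoffWeight_le_one (hM : 0 ≤ M) (a b : ℕ → ℝ) (j : ℕ) :
    ‖(cutoffWeight M a b j : ℂ)‖ ≤ 1 := by
  rw [Complex.norm_real, Real.norm_of_nonneg (cutoffWeight_nonneg hM a b j)]
  exact cutoffWeight_le_one hM a b j

theorem one_sub_cutoffWeight_le (hM : 0 ≤ M) (a b : ℕ → ℝ) (j : ℕ) :
    1 - cutoffWeight M a b j ≤
      (1 - cutoff M (a j)) + (1 - cutoff M (b j)) + (1 - cutoff M (b (j - 1))) := by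
  have hunion {x y : ℝ} (hx : x ≤ 1) (hy : y ≤ 1) : 1 - x * y ≤ (1 - x) + (1 - y) := by
    linarith [mul_nonneg (sub_nonneg.2 hx) (sub_nonneg.2 hy)]
  have hab := mul_le_one₀ (cutoff_le_one M (a j)) (cutoff_nonneg hM (b j)) (cutoff_le_one M (b j))
  exact (hunion hab (cutoff_le_one M _)).trans
    (by gcongr; exact hunion (cutoff_le_one M _) (cutoff_le_one M _))

theorem variation_cutoffWeight_le (hM : 0 ≤ M) (a b : ℕ → ℝ) (k : ℕ) :
    variation k (fun j => (cutoffWeight M a b j : ℂ)) ≤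
      variation k (fun j => clamp M (a j)) + 2 * variation k (fun j => clamp M (b j)) := by
  have hnorm (x : ℝ) : ‖cutoff M x‖ ≤ 1 := by
    rw [Real.norm_of_nonneg (cutoff_nonneg hM x)]
    exact cutoff_le_one M x
  have hcut (x : ℕ → ℝ) :
      variation k (fun j => cutoff M (x j)) ≤ variation k (fun j => clamp M (x j)) := by
    simpa using variation_le_mul (C := 1)
      (fun i j => by simpa using abs_cutoff_sub_cutoff_le M (x i) (x j)) k
  have hab : variation k (fun j => cutoff M (a j) * cutoff M (b j)) ≤
      1 * variation k (fun j => cutoff M (b j)) + 1 * variation k (fun j => cutoff M (a j)) :=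
    variation_mul_le (fun j => hnorm (a j)) (fun j => hnorm (b j)) k
  have hweight : variation k (cutoffWeight M a b) ≤
      1 * variation k (fun j => cutoff M (b (j - 1))) +
        1 * variation k (fun j => cutoff M (a j) * cutoff M (b j)) :=
    variation_mul_le
      (fun j => (norm_mul_le _ _).trans (mul_le_one₀ (hnorm _) (norm_nonneg _) (hnorm _)))
      (fun j => hnorm (b (j - 1))) k
  have hreal : variation k (fun j => (cutoffWeight M a b j : ℂ)) =
      variation k (cutoffWeight M a b) := by
    simp only [variation, ← Complex.ofReal_sub, Complex.norm_real]
  linarith [hcut a, hcut b, variation_comp_pred_le k fun j => cutoff M (b j)]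

theorem clamp_eq_self_of_cutoffWeight_ne_zero (hM : 0 ≤ M) {a b : ℕ → ℝ} {j : ℕ}
    (hj : cutoffWeight M a b j ≠ 0) :
    clamp M (a j) = a j ∧ clamp M (b j) = b j ∧ clamp M (b (j - 1)) = b (j - 1) := by
  obtain ⟨hab, hpred⟩ := mul_ne_zero_iff.1 hj
  obtain ⟨ha, hb⟩ := mul_ne_zero_iff.1 hab
  exact ⟨clamp_eq_self_of_cutoff_ne_zero hM ha, clamp_eq_self_of_cutoff_ne_zero hM hb,
    clamp_eq_self_of_cutoff_ne_zero hM hpred⟩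

/-- The amplitude that starts as the cutoff weight and evolves by the symbol. -/
def cutoffAmplitude (M : ℝ) (a b : ℕ → ℝ) (t σ : ℝ) : ℕ → ℂ :=
  amplitude a b (fun j => (cutoffWeight M a b j : ℂ)) t σ

theorem cutoffAmplitude_eq_amplitude_clamp (hM : 0 ≤ M) (a b : ℕ → ℝ) (t σ : ℝ) :
    cutoffAmplitude M a b t σ = amplitude (fun j => clamp M (a j)) (fun j => clamp M (b j))
      (fun j => (cutoffWeight M a b j : ℂ)) t σ := by
  ext j
  by_cases hj : cutoffWeight M a b j = 0
  · simp [cutoffAmplitude, amplitude, hj]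
  · obtain ⟨ha, hb, -⟩ := clamp_eq_self_of_cutoffWeight_ne_zero hM hj
    simp only [cutoffAmplitude, amplitude, ha, hb]

theorem symbolResidual_cutoffAmplitude (hM : 0 ≤ M) (k : ℕ) (a b : ℕ → ℝ) (t σ : ℝ) :
    symbolResidual k b t (cutoffAmplitude M a b t σ) =
      symbolResidual k (fun j => clamp M (b j)) t (cutoffAmplitude M a b t σ) := by
  refine symbolResidual_congr (fun j => ?_) (fun j => ?_) k t
  · by_cases hj : cutoffWeight M a b j = 0
    · simp [cutoffAmplitude, amplitude, hj]
    · rw [(clamp_eq_self_of_cutoffWeight_ne_zero hM hj).2.1]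
  · by_cases hj : cutoffWeight M a b (j + 1) = 0
    · simp [cutoffAmplitude, amplitude, hj]
    · have hpred := (clamp_eq_self_of_cutoffWeight_ne_zero hM hj).2.2
      rw [Nat.add_sub_cancel] at hpred
      rw [hpred]

theorem norm_sq_wavePacket_symbolResidual_cutoffAmplitude_le (hM : 0 ≤ M) (k : ℕ) (a b : ℕ → ℝ)
    (t σ : ℝ) :
    ‖wavePacket k t (symbolResidual k b t (cutoffAmplitude M a b t σ))‖ ^ 2 ≤
      4 * M * (2 * M + (2 * M * (|σ| + 1) + 1) * (variation k (fun j => clamp M (a j)) +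
        2 * variation k (fun j => clamp M (b j)))) := by
  set V := variation k (fun j => clamp M (a j)) + 2 * variation k (fun j => clamp M (b j)) with hV
  have hnorm (j : ℕ) : ‖cutoffAmplitude M a b t σ j‖ ≤ 1 :=
    (norm_amplitude _ _ _ _ _ _).trans_le (norm_cutoffWeight_le_one hM a b j)
  have hamp : variation k (cutoffAmplitude M a b t σ) ≤ (|σ| + 1) * V := by
    rw [cutoffAmplitude_eq_amplitude_clamp hM]
    linarith [variation_amplitude_le (a := fun j => clamp M (a j)) (b := fun j => clamp M (b j))
      (norm_cutoffWeight_le_one hM a b) k t σ, variation_cutoffWeight_le hM a b k, hV]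
  have hb : variation k (fun j => clamp M (b j)) ≤ V := by
    linarith [variation_nonneg k fun j => clamp M (a j), variation_nonneg k fun j => clamp M (b j),
      hV]
  rw [symbolResidual_cutoffAmplitude hM]
  refine (norm_sq_wavePacket_symbolResidual_le (fun j => abs_clamp_le hM (b j)) hnorm k t).trans
    (mul_le_mul_of_nonneg_left ?_ (by positivity))
  linarith [mul_le_mul_of_nonneg_left hamp (by positivity : 0 ≤ 2 * M)]

end CutoffWeight

section TraceApproximation

open scoped InnerProductSpace

variable {k : ℕ} {a b : ℕ → ℝ} {s : ℝ}

theorem isSelfAdjoint_jacobiOperator (k : ℕ) (a b : ℕ → ℝ) :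
    IsSelfAdjoint (jacobiOperator k a b) :=
  isSelfAdjoint_toEuclideanCLM_map_ofReal (jacobiMatrix_isHermitian k a b)

theorem norm_exp_jacobiOperator_wavePacket_sub_le {c : ℕ → ℂ} {t R : ℝ}
    (hR : ∀ σ ∈ Set.uIcc 0 s, ‖wavePacket k t (symbolResidual k b t (amplitude a b c t σ))‖ ≤ R) :
    ‖NormedSpace.exp ((s * Complex.I : ℂ) • jacobiOperator k a b) (wavePacket k t c) -
      wavePacket k t (amplitude a b c t s)‖ ≤ R * |s| := by
  have hgenerator (σ : ℝ) :
      wavePacket k t (Complex.I • fun i => jacobiSymbol (a i, b i) t * amplitude a b c t σ i) -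
          Complex.I • jacobiOperator k a b (wavePacket k t (amplitude a b c t σ)) =
        -(Complex.I • wavePacket k t (symbolResidual k b t (amplitude a b c t σ))) := by
    rw [jacobiOperator_wavePacket, wavePacket_smul, smul_add, sub_add_cancel_left]
  have hduhamel := norm_exp_mul_I_smul_apply_sub_le (isSelfAdjoint_jacobiOperator k a b)
    (fun σ => hasDerivAt_wavePacket (k := k) (t := t) (hasDerivAt_amplitude a b c t σ))
    (fun σ hσ => by simpa [hgenerator, norm_smul] using hR σ hσ)
  simpa only [amplitude_zero] using hduhamel

theorem norm_exp_jacobiOperator_planeWave_sub_le {c : ℕ → ℂ} {t R : ℝ}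
    (hR : ∀ σ ∈ Set.uIcc 0 s, ‖wavePacket k t (symbolResidual k b t (amplitude a b c t σ))‖ ≤ R) :
    ‖NormedSpace.exp ((s * Complex.I : ℂ) • jacobiOperator k a b) (wavePacket k t 1) -
      wavePacket k t (amplitude a b 1 t s)‖ ≤ 2 * ‖wavePacket k t (1 - c)‖ + R * |s| := by
  set U := NormedSpace.exp ((s * Complex.I : ℂ) • jacobiOperator k a b)
  have hleft : ‖U (wavePacket k t (1 - c))‖ = ‖wavePacket k t (1 - c)‖ :=
    norm_exp_mul_I_smul_apply (isSelfAdjoint_jacobiOperator k a b) s _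
  have hright : ‖wavePacket k t (amplitude a b (1 - c) t s)‖ = ‖wavePacket k t (1 - c)‖ := by
    rw [← sq_eq_sq₀ (norm_nonneg _) (norm_nonneg _), norm_sq_wavePacket, norm_sq_wavePacket]
    simp only [norm_amplitude]
  have hsplit : U (wavePacket k t 1) - wavePacket k t (amplitude a b 1 t s) =
      U (wavePacket k t (1 - c)) + (U (wavePacket k t c) - wavePacket k t (amplitude a b c t s)) -
        wavePacket k t (amplitude a b (1 - c) t s) := by
    rw [amplitude_sub, wavePacket_sub, wavePacket_sub, map_sub]
    abel
  calc ‖U (wavePacket k t 1) - wavePacket k t (amplitude a b 1 t s)‖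
      ≤ ‖U (wavePacket k t (1 - c))‖ +
          ‖U (wavePacket k t c) - wavePacket k t (amplitude a b c t s)‖ +
          ‖wavePacket k t (amplitude a b (1 - c) t s)‖ := by
        rw [hsplit]
        exact (norm_sub_le _ _).trans (by gcongr; exact norm_add_le _ _)
    _ ≤ 2 * ‖wavePacket k t (1 - c)‖ + R * |s| := by
        linarith [norm_exp_jacobiOperator_wavePacket_sub_le hR]

theorem norm_inner_exp_jacobiOperator_sub_sum_le {c : ℕ → ℂ} {t R : ℝ}
    (hR : ∀ σ ∈ Set.uIcc 0 s, ‖wavePacket k t (symbolResidual k b t (amplitude a b c t σ))‖ ≤ R) :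
    ‖⟪wavePacket k t 1,
        NormedSpace.exp ((s * Complex.I : ℂ) • jacobiOperator k a b) (wavePacket k t 1)⟫_ℂ -
      ∑ j ∈ Finset.range k, Complex.exp (s * jacobiSymbol (a j, b j) t * Complex.I)‖ ≤
      √k * (2 * √(∑ j ∈ Finset.range k, ‖1 - c j‖ ^ 2) + R * |s|) := by
  have hplane : ‖wavePacket k t 1‖ = √k := by
    rw [← Real.sqrt_sq (norm_nonneg (wavePacket k t 1)), norm_sq_wavePacket]
    simp
  have hdefect : ‖wavePacket k t (1 - c)‖ = √(∑ j ∈ Finset.range k, ‖1 - c j‖ ^ 2) := by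
    rw [← Real.sqrt_sq (norm_nonneg (wavePacket k t (1 - c))), norm_sq_wavePacket]
    simp
  have hsymbol : ∑ j ∈ Finset.range k, Complex.exp (s * jacobiSymbol (a j, b j) t * Complex.I) =
      ⟪wavePacket k t 1, wavePacket k t (amplitude a b 1 t s)⟫_ℂ := by
    simp [inner_wavePacket, amplitude]
  rw [hsymbol, ← inner_sub_right, ← hplane, ← hdefect]
  refine (norm_inner_le_norm _ _).trans ?_
  gcongr
  exact norm_exp_jacobiOperator_planeWave_sub_le hR

theorem sum_exp_eigenvalues_eq_integral (k : ℕ) (a b : ℕ → ℝ) (s : ℝ) :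
    ∑ i, Complex.exp (s * (jacobiMatrix_isHermitian k a b).eigenvalues i * Complex.I) =
      ∫ t, ⟪wavePacket k t 1,
        NormedSpace.exp ((s * Complex.I : ℂ) • jacobiOperator k a b) (wavePacket k t 1)⟫_ℂ
        ∂phaseMeasure := by
  simp only [mul_right_comm _ _ Complex.I]
  rw [jacobiOperator, exp_smul_toEuclideanCLM, integral_inner_toEuclideanCLM_wavePacket_one,
    trace_exp_smul_map_ofReal]

theorem norm_sum_exp_eigenvalues_sub_sum_symbolMean_le {c : ℕ → ℂ} {R : ℝ}
    (hR : ∀ t, ∀ σ ∈ Set.uIcc 0 s,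
      ‖wavePacket k t (symbolResidual k b t (amplitude a b c t σ))‖ ≤ R) :
    ‖∑ i, Complex.exp (s * (jacobiMatrix_isHermitian k a b).eigenvalues i * Complex.I) -
      ∑ j ∈ Finset.range k, symbolMean (fun x => Complex.exp (s * x * Complex.I)) (a j, b j)‖ ≤
      √k * (2 * √(∑ j ∈ Finset.range k, ‖1 - c j‖ ^ 2) + R * |s|) := by
  have hsymbol (p : ℝ × ℝ) :
      Integrable (fun t => Complex.exp (s * jacobiSymbol p t * Complex.I)) phaseMeasure := by
    refine integrable_phaseMeasure_of_continuous ?_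
    have := continuous_uncurry_jacobiSymbol.comp (Continuous.prodMk_right p)
    simp only [Function.comp_def, Function.uncurry_apply_pair] at this
    fun_prop
  have hpropagator : Integrable (fun t => ⟪wavePacket k t 1, NormedSpace.exp
      ((s * Complex.I : ℂ) • jacobiOperator k a b) (wavePacket k t 1)⟫_ℂ) phaseMeasure := by
    refine integrable_phaseMeasure_of_continuous ?_
    have : Continuous fun t => wavePacket k t 1 := by
      unfold wavePacket
      fun_prop
    fun_prop
  simp only [symbolMean]
  rw [sum_exp_eigenvalues_eq_integral, ← integral_finsetSum _ fun j _ => hsymbol (a j, b j),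
    ← integral_sub hpropagator (integrable_finsetSum _ fun j _ => hsymbol (a j, b j))]
  simpa using norm_integral_le_of_norm_le_const (μ := phaseMeasure)
    (Eventually.of_forall fun t => norm_inner_exp_jacobiOperator_sub_sum_le (hR t))

end TraceApproximation

section SlowVariation

/-- The truncations of the vectors `a k` at any fixed level have total variation `o(k)`. -/
def SlowlyVarying (a : ℕ → ℕ → ℝ) : Prop :=
  ∀ M : ℝ, 0 ≤ M → Tendsto (fun k : ℕ => variation k (fun i => clamp M (a k i)) / k) atTop (nhds 0)

theorem tendsto_variation_div_of_aeincreasing {M : ℝ} {a c : ℕ → ℕ → ℝ} (ha : AEIncreasing a)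
    (hbound : ∀ k i, |c k i| ≤ M)
    (hmono : ∀ k i, a k i ≤ a k (i + 1) → c k i ≤ c k (i + 1)) :
    Tendsto (fun k : ℕ => variation k (c k) / k) atTop (nhds 0) := by
  have hM : 0 ≤ M := (abs_nonneg _).trans (hbound 0 0)
  have hlim : Tendsto (fun k : ℕ => 2 * M / k + 4 * M *
      (1 - ((Finset.range (k - 1)).filter fun i => a k i ≤ a k (i + 1)).card / (k : ℝ)))
      atTop (nhds 0) := by
    simpa using (tendsto_const_div_atTop_nhds_zero_nat (2 * M)).add
      ((ha.const_sub 1).const_mul (4 * M))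
  refine squeeze_zero' (Eventually.of_forall fun k =>
    div_nonneg (variation_nonneg k _) k.cast_nonneg) ?_ hlim
  filter_upwards [eventually_gt_atTop 0] with k hk
  have hcard : (((Finset.range (k - 1)).filter fun i => a k i ≤ a k (i + 1)).card : ℝ) ≤
      ((Finset.range (k - 1)).filter fun i => c k i ≤ c k (i + 1)).card :=
    mod_cast Finset.card_le_card (Finset.monotone_filter_right _ fun i _ => hmono k i)
  calc variation k (c k) / k
      ≤ (2 * M + 4 * M *
          (k - ((Finset.range (k - 1)).filter fun i => a k i ≤ a k (i + 1)).card)) / k := by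
        gcongr
        exact (variation_le_of_abs_le (hbound k) k).trans (by gcongr)
    _ = _ := by field_simp

theorem AEIncreasing.slowlyVarying {a : ℕ → ℕ → ℝ} (ha : AEIncreasing a) : SlowlyVarying a :=
  fun M hM => tendsto_variation_div_of_aeincreasing ha (fun k i => abs_clamp_le hM (a k i))
    fun _ _ h => monotone_clamp M h

theorem AEDecreasing.slowlyVarying {a : ℕ → ℕ → ℝ} (ha : AEDecreasing a) : SlowlyVarying a := by
  intro M hM
  have hneg : AEIncreasing fun k i => -a k i := by
    simpa [AEIncreasing, AEDecreasing] using ha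
  simpa only [variation_neg] using
    tendsto_variation_div_of_aeincreasing (c := fun k i => -clamp M (a k i)) hneg
      (fun k i => (abs_neg _).trans_le (abs_clamp_le hM (a k i)))
      fun _ _ h => neg_le_neg (monotone_clamp M (neg_le_neg_iff.1 h))

theorem AEMonotone.slowlyVarying {a : ℕ → ℕ → ℝ} (ha : AEMonotone a) : SlowlyVarying a :=
  ha.elim AEIncreasing.slowlyVarying AEDecreasing.slowlyVarying

end SlowVariation

section CutoffDefect

variable {M : ℝ}

/-- The mass lost by cutting off at level `M`; the off-diagonal coefficient counts twice because
`cutoffWeight` involves two of them per site. -/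
def cutoffDefect (M : ℝ) (p : ℝ × ℝ) : ℝ := (1 - cutoff M p.1) + 2 * (1 - cutoff M p.2)

theorem continuous_cutoffDefect (M : ℝ) : Continuous (cutoffDefect M) := by
  unfold cutoffDefect
  fun_prop

theorem abs_cutoffDefect_le (hM : 0 ≤ M) (p : ℝ × ℝ) : |cutoffDefect M p| ≤ 3 := by
  unfold cutoffDefect
  rw [abs_le]
  constructor <;> linarith [cutoff_nonneg hM p.1, cutoff_nonneg hM p.2, cutoff_le_one M p.1,
    cutoff_le_one M p.2]

theorem cutoffDefect_eventually_eq_zero (p : ℝ × ℝ) :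
    ∀ᶠ M in atTop, cutoffDefect M p = 0 := by
  filter_upwards [eventually_ge_atTop (|p.1| + 1), eventually_ge_atTop (|p.2| + 1)] with M h₁ h₂
  simp [cutoffDefect, cutoff_eq_one h₁, cutoff_eq_one h₂]

theorem tendsto_integral_cutoffDefect (μ : Measure (ℝ × ℝ)) [IsFiniteMeasure μ] :
    Tendsto (fun M => ∫ p, cutoffDefect M p ∂μ) atTop (nhds 0) := by
  simpa using tendsto_integral_filter_of_dominated_convergence (fun _ => 3)
    (Eventually.of_forall fun M => (continuous_cutoffDefect M).aestronglyMeasurable)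
    ((eventually_ge_atTop 0).mono fun M hM => Eventually.of_forall (abs_cutoffDefect_le hM))
    (integrable_const _)
    (Eventually.of_forall fun p => tendsto_const_nhds.congr'
      ((cutoffDefect_eventually_eq_zero p).mono fun M hM => hM.symm))

theorem sum_one_sub_cutoffWeight_le (hM : 0 ≤ M) (a b : ℕ → ℝ) (k : ℕ) :
    ∑ j ∈ Finset.range k, (1 - cutoffWeight M a b j) ≤
      ∑ j ∈ Finset.range k, cutoffDefect M (a j, b j) + 1 := by
  have hshift : ∑ j ∈ Finset.range k, (1 - cutoff M (b (j - 1))) ≤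
      ∑ j ∈ Finset.range k, (1 - cutoff M (b j)) + 1 := by
    cases k with
    | zero => simp
    | succ n =>
      rw [Finset.sum_range_succ', Finset.sum_range_succ]
      simp only [Nat.add_sub_cancel]
      linarith [cutoff_nonneg hM (b (0 - 1)), cutoff_le_one M (b n)]
  calc ∑ j ∈ Finset.range k, (1 - cutoffWeight M a b j)
      ≤ ∑ j ∈ Finset.range k,
          ((1 - cutoff M (a j)) + (1 - cutoff M (b j)) + (1 - cutoff M (b (j - 1)))) :=
        Finset.sum_le_sum fun j _ => one_sub_cutoffWeight_le hM a b j
    _ ≤ ∑ j ∈ Finset.range k, cutoffDefect M (a j, b j) + 1 := by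
        simp only [cutoffDefect, Finset.sum_add_distrib, ← Finset.mul_sum]
        linarith

theorem sum_norm_one_sub_cutoffWeight_sq_le (hM : 0 ≤ M) (a b : ℕ → ℝ) (k : ℕ) :
    ∑ j ∈ Finset.range k, ‖1 - (cutoffWeight M a b j : ℂ)‖ ^ 2 ≤
      ∑ j ∈ Finset.range k, cutoffDefect M (a j, b j) + 1 := by
  refine (Finset.sum_le_sum fun j _ => ?_).trans (sum_one_sub_cutoffWeight_le hM a b k)
  have h₀ := cutoffWeight_nonneg hM a b j
  have h₁ : 0 ≤ 1 - cutoffWeight M a b j := sub_nonneg.2 (cutoffWeight_le_one hM a b j)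
  rw [← Complex.ofReal_one, ← Complex.ofReal_sub, Complex.norm_real, Real.norm_of_nonneg h₁]
  exact pow_le_of_le_one h₁ (by linarith) two_ne_zero

end CutoffDefect

section CharacteristicFunction

theorem norm_mean_exp_eigenvalues_sub_mean_symbolMean_le {M : ℝ} (hM : 0 ≤ M) {k : ℕ} (hk : 0 < k)
    (a b : ℕ → ℝ) (s : ℝ) :
    ‖(1 / (k : ℝ)) • ∑ i,
        Complex.exp (s * (jacobiMatrix_isHermitian k a b).eigenvalues i * Complex.I) -
      (1 / (k : ℝ)) • ∑ j ∈ Finset.range k,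
        symbolMean (fun x => Complex.exp (s * x * Complex.I)) (a j, b j)‖ ≤
      2 * √(1 / k * ∑ j ∈ Finset.range k, cutoffDefect M (a j, b j) + 1 / k) +
        √(8 * M ^ 2 / k + 4 * M * (2 * M * (|s| + 1) + 1) *
          (variation k (fun j => clamp M (a j)) / k +
            2 * (variation k (fun j => clamp M (b j)) / k))) * |s| := by
  have hk : (0 : ℝ) < k := Nat.cast_pos.2 hk
  have hscale (x : ℝ) : 1 / (k : ℝ) * (√k * √x) = √(x / k) := by
    rw [Real.sqrt_div' _ hk.le, ← Real.mul_self_sqrt hk.le]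
    field_simp
    simp
  set V := variation k (fun j => clamp M (a j)) + 2 * variation k (fun j => clamp M (b j))
  set W := ∑ j ∈ Finset.range k, cutoffDefect M (a j, b j)
  have hV : 0 ≤ V :=
    add_nonneg (variation_nonneg k _) (mul_nonneg zero_le_two (variation_nonneg k _))
  have hresidual (t : ℝ) : ∀ σ ∈ Set.uIcc 0 s,
      ‖wavePacket k t (symbolResidual k b t (cutoffAmplitude M a b t σ))‖ ≤
        √(4 * M * (2 * M + (2 * M * (|s| + 1) + 1) * V)) := by
    intro σ hσ
    have hσs : |σ| ≤ |s| := by simpa using Set.abs_sub_left_of_mem_uIcc hσ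
    refine Real.le_sqrt_of_sq_le
      ((norm_sq_wavePacket_symbolResidual_cutoffAmplitude_le hM k a b t σ).trans ?_)
    gcongr
  have hdefect : √(∑ j ∈ Finset.range k, ‖1 - (cutoffWeight M a b j : ℂ)‖ ^ 2) ≤ √(W + 1) :=
    Real.sqrt_le_sqrt (sum_norm_one_sub_cutoffWeight_sq_le hM a b k)
  rw [← smul_sub, norm_smul, Real.norm_of_nonneg (by positivity)]
  calc 1 / (k : ℝ) * ‖_‖
      ≤ 1 / (k : ℝ) * (√k * (2 * √(W + 1) +
          √(4 * M * (2 * M + (2 * M * (|s| + 1) + 1) * V)) * |s|)) := by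
        gcongr
        exact (norm_sum_exp_eigenvalues_sub_sum_symbolMean_le hresidual).trans (by gcongr)
    _ = 2 * √((W + 1) / k) + √(4 * M * (2 * M + (2 * M * (|s| + 1) + 1) * V) / k) * |s| := by
        rw [← hscale, ← hscale]
        ring
    _ = _ := by
        congr 3 <;> ring

theorem MuDistributedR.tendsto_mean_complex {a b : ℕ → ℕ → ℝ} {μ : Measure (ℝ × ℝ)}
    [IsFiniteMeasure μ] (hμ : MuDistributedR a b μ) {ψ : ℝ × ℝ → ℂ} (hψ : Continuous ψ) {C : ℝ}
    (hC : ∀ p, ‖ψ p‖ ≤ C) :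
    Tendsto (fun k : ℕ => (1 / (k : ℝ)) • ∑ j ∈ Finset.range k, ψ (a k j, b k j)) atTop
      (nhds (∫ p, ψ p ∂μ)) := by
  have hint : Integrable ψ μ := .of_bound hψ.aestronglyMeasurable C (Eventually.of_forall hC)
  have hre := hμ (fun p => (ψ p).re) (by fun_prop)
    ⟨C, fun p => (Complex.abs_re_le_norm _).trans (hC p)⟩
  have him := hμ (fun p => (ψ p).im) (by fun_prop)
    ⟨C, fun p => (Complex.abs_im_le_norm _).trans (hC p)⟩
  rw [← integral_re_add_im hint]
  refine (((Complex.continuous_ofReal.tendsto _).comp hre).add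
    (((Complex.continuous_ofReal.tendsto _).comp him).mul_const Complex.I)).congr fun k => ?_
  apply Complex.ext <;> simp

theorem tendsto_cutoff_error {M : ℝ} (hM : 0 ≤ M) {a b : ℕ → ℕ → ℝ} (ha : SlowlyVarying a)
    (hb : SlowlyVarying b) {μ : Measure (ℝ × ℝ)} (hμ : MuDistributedR a b μ) (s : ℝ) :
    Tendsto (fun k : ℕ =>
      2 * √(1 / k * ∑ j ∈ Finset.range k, cutoffDefect M (a k j, b k j) + 1 / k) +
        √(8 * M ^ 2 / k + 4 * M * (2 * M * (|s| + 1) + 1) *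
          (variation k (fun j => clamp M (a k j)) / k +
            2 * (variation k (fun j => clamp M (b k j)) / k))) * |s|)
      atTop (nhds (2 * √(∫ p, cutoffDefect M p ∂μ))) := by
  have hdefect := (hμ _ (continuous_cutoffDefect M) ⟨3, abs_cutoffDefect_le hM⟩).add
    (tendsto_const_div_atTop_nhds_zero_nat (1 : ℝ))
  have hresidual := (tendsto_const_div_atTop_nhds_zero_nat (8 * M ^ 2)).add
    (((ha M hM).add ((hb M hM).const_mul 2)).const_mul (4 * M * (2 * M * (|s| + 1) + 1)))
  simpa using (hdefect.sqrt.const_mul 2).add (hresidual.sqrt.mul_const |s|)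

theorem tendsto_mean_exp_eigenvalues {a b : ℕ → ℕ → ℝ} (ha : SlowlyVarying a)
    (hb : SlowlyVarying b) {μ : Measure (ℝ × ℝ)} [IsProbabilityMeasure μ]
    (hμ : MuDistributedR a b μ) (s : ℝ) :
    Tendsto (fun k : ℕ => (1 / (k : ℝ)) • ∑ i,
        Complex.exp (s * (jacobiMatrix_isHermitian k (a k) (b k)).eigenvalues i * Complex.I))
      atTop (nhds (charFun (symbolMeasure μ) s)) := by
  have hcont : Continuous fun x : ℝ => Complex.exp (s * x * Complex.I) := by fun_prop
  have hnorm (x : ℝ) : ‖Complex.exp (s * x * Complex.I)‖ ≤ 1 := by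
    rw [← Complex.ofReal_mul, Complex.norm_exp_ofReal_mul_I]
  have hsymbol := hμ.tendsto_mean_complex (continuous_symbolMean hcont hnorm)
    (norm_symbolMean_le hnorm)
  rw [charFun_apply_real, integral_symbolMeasure μ hcont hnorm]
  refine hsymbol.congr_dist (Metric.tendsto_nhds.2 fun ε hε => ?_)
  have hcutoff : Tendsto (fun M => 2 * √(∫ p, cutoffDefect M p ∂μ)) atTop (nhds 0) := by
    simpa using (tendsto_integral_cutoffDefect μ).sqrt.const_mul 2
  obtain ⟨M, hMε, hM⟩ := ((hcutoff.eventually_lt_const hε).and (eventually_ge_atTop 0)).exists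
  filter_upwards [(tendsto_cutoff_error hM ha hb hμ s).eventually_lt_const hMε,
    eventually_gt_atTop 0] with k herror hk
  rw [Real.dist_0_eq_abs, abs_of_nonneg dist_nonneg, dist_comm, dist_eq_norm]
  exact (norm_mean_exp_eigenvalues_sub_mean_symbolMean_le hM hk (a k) (b k) s).trans_lt herror

end CharacteristicFunction

section EmpiricalMeasure

variable {ι : Type*} [Fintype ι]

/-- The uniform measure on the values of the finite family `x`, counted with multiplicity; it is a
probability measure unless the family is empty, when it is `0`. -/
def empiricalMeasure (x : ι → ℝ) : Measure ℝ :=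
  (Fintype.card ι : ENNReal)⁻¹ • ∑ i, Measure.dirac (x i)

instance isProbabilityMeasure_empiricalMeasure [Nonempty ι] (x : ι → ℝ) :
    IsProbabilityMeasure (empiricalMeasure x) := by
  refine ⟨?_⟩
  simp [empiricalMeasure, ENNReal.inv_mul_cancel]

theorem integral_empiricalMeasure {E : Type*} [NormedAddCommGroup E] [NormedSpace ℝ E]
    [CompleteSpace E] (x : ι → ℝ) (f : ℝ → E) :
    ∫ y, f y ∂(empiricalMeasure x) = (1 / (Fintype.card ι : ℝ)) • ∑ i, f (x i) := by
  rw [empiricalMeasure, integral_smul_measure,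
    integral_finsetSum_measure fun i _ => integrable_dirac enorm_lt_top]
  simp

theorem charFun_empiricalMeasure (x : ι → ℝ) (s : ℝ) :
    charFun (empiricalMeasure x) s =
      (1 / (Fintype.card ι : ℝ)) • ∑ i, Complex.exp (s * x i * Complex.I) := by
  rw [charFun_apply_real, integral_empiricalMeasure]

theorem tendsto_mean_of_tendsto_mean_exp {x : ∀ k : ℕ, Fin k → ℝ} {ν : Measure ℝ}
    [IsProbabilityMeasure ν]
    (hx : ∀ s : ℝ, Tendsto (fun k : ℕ => (1 / (k : ℝ)) • ∑ i,
      Complex.exp (s * x k i * Complex.I)) atTop (nhds (charFun ν s)))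
    {φ : ℝ → ℝ} (hφ : Continuous φ) {C : ℝ} (hC : ∀ y, ‖φ y‖ ≤ C) :
    Tendsto (fun k : ℕ => (1 / (k : ℝ)) * ∑ i, φ (x k i)) atTop (nhds (∫ y, φ y ∂ν)) := by
  let νseq : ℕ → ProbabilityMeasure ℝ := fun n => ⟨empiricalMeasure (x (n + 1)), inferInstance⟩
  let νlim : ProbabilityMeasure ℝ := ⟨ν, inferInstance⟩
  have hconv : Tendsto νseq atTop (nhds νlim) := by
    refine ProbabilityMeasure.tendsto_of_tendsto_charFun fun s => ?_
    simpa only [νseq, νlim, ProbabilityMeasure.coe_mk, charFun_empiricalMeasure,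
      Fintype.card_fin] using (tendsto_add_atTop_iff_nat 1).2 (hx s)
  rw [← tendsto_add_atTop_iff_nat 1]
  simpa only [νseq, νlim, ProbabilityMeasure.coe_mk,
    BoundedContinuousFunction.coe_ofNormedAddCommGroup, integral_empiricalMeasure, Fintype.card_fin,
    smul_eq_mul] using ProbabilityMeasure.tendsto_iff_forall_integral_tendsto.1 hconv
      (BoundedContinuousFunction.ofNormedAddCommGroup φ hφ C hC)

end EmpiricalMeasure

theorem trace_formula_monotone_unbounded_general {a b : ℕ → ℕ → ℝ} (ha : SlowlyVarying a)
    (hb : SlowlyVarying b) {μ : Measure (ℝ × ℝ)} [IsProbabilityMeasure μ]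
    (hμ : MuDistributedR a b μ) {φ : ℝ → ℝ} (hφc : Continuous φ) (hφb : ∃ C : ℝ, ∀ x, |φ x| ≤ C) :
    Tendsto (fun k : ℕ => (1 / (k : ℝ)) * jacobiTrace k (a k) (b k) φ) atTop
      (nhds ((1 / Real.pi) *
        ∫ p, (∫ t in (0 : ℝ)..Real.pi, φ (p.1 + 2 * p.2 * Real.cos t)) ∂μ)) := by
  obtain ⟨C, hC⟩ := hφb
  have hlimit : ∫ x, φ x ∂(symbolMeasure μ) = (1 / Real.pi) *
      ∫ p, (∫ t in (0 : ℝ)..Real.pi, φ (p.1 + 2 * p.2 * Real.cos t)) ∂μ := by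
    simp only [integral_symbolMeasure μ hφc hC, symbolMean_eq_intervalIntegral hφc, smul_eq_mul,
      integral_const_mul]
  rw [← hlimit]
  exact tendsto_mean_of_tendsto_mean_exp (tendsto_mean_exp_eigenvalues ha hb hμ) hφc hC

/-- the trace formula for a.e. monotone sequences with entries `O(log k)` that
are `μ`-distributed for a tight probability measure `μ` on `ℝ²`. -/
theorem trace_formula_monotone_unbounded (a b : ℕ → ℕ → ℝ)
    (hma : AEMonotone a) (hmb : AEMonotone b)
    (hloga : ∃ C : ℝ, ∀ᶠ k : ℕ in Filter.atTop, ∀ j < k, |a k j| ≤ C * Real.log k)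
    (hlogb : ∃ C : ℝ, ∀ᶠ k : ℕ in Filter.atTop, ∀ j < k, |b k j| ≤ C * Real.log k)
    (μ : Measure (ℝ × ℝ)) [IsProbabilityMeasure μ]
    (htight : TightRect μ) (hμ : MuDistributedR a b μ)
    (φ : ℝ → ℝ) (hφc : Continuous φ) (hφb : ∃ C : ℝ, ∀ x, |φ x| ≤ C) :
    Filter.Tendsto (fun k : ℕ => (1 / (k : ℝ)) * jacobiTrace k (a k) (b k) φ)
      Filter.atTop
      (nhds ((1 / Real.pi) *
        ∫ p, (∫ t in (0 : ℝ)..Real.pi, φ (p.1 + 2 * p.2 * Real.cos t)) ∂μ)) :=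
  trace_formula_monotone_unbounded_general hma.slowlyVarying hmb.slowlyVarying hμ hφc hφb
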